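/- Let W be a real symmetric n×n matrix that is positive semidefinite, stochastic (entrywise nonnegative with each row summing to 1), and irreducible, and let A be a nonzero real m×n matrix with A𝟙 ≠ 0, and b ∈ ℝ^m. Fix γ with 0 < γ < 1/λ_max(AᵀA), and let α_k = (t_k − 1)/t_{k+1} where t₁ = 1 and t_{k+1} = (1 + √(1 + 4t_k²))/2. Then there exists a unique x* ∈ ℝ^n such that for every initialization x₀ ∈ ℝ^n, the PnP-FISTA iterates defined by y₁ = x₀ and, for k ≥ 1, x_k = W(y_k − γAᵀ(A y_k − b)) and y_{k+1} = x_k + α_k(x_k − x_{k−1}), converge linearly to x*: there exist C > 0, β ∈ [0,1), and K ≥ 1 such that ‖x_k − x*‖₂ ≤ C·β^k for all k ≥ K. -/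

import Mathlib

open Filter Matrix

/-- The Euclidean (ℓ²) norm on `Fin n → ℝ`. -/
noncomputable def norm2 {n : ℕ} (x : Fin n → ℝ) : ℝ := Real.sqrt (∑ i, x i ^ 2)

/-- The largest eigenvalue of a real (symmetric) matrix, as the supremum of its real
spectrum. -/
noncomputable def lamMax {n : ℕ} (S : Matrix (Fin n) (Fin n) ℝ) : ℝ := sSup (spectrum ℝ S)


def LD (f : ℕ → ℝ) : Prop := ∃ C, 0 ≤ C ∧ ∃ β, 0 ≤ β ∧ β < 1 ∧ ∀ k, |f k| ≤ C * β ^ k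

lemma LD.zero : LD (fun _ => 0) := ⟨0, le_rfl, 0, le_rfl, by norm_num, by simp⟩

lemma LD.add {f g : ℕ → ℝ} (hf : LD f) (hg : LD g) : LD (fun k => f k + g k) := by
  obtain ⟨C, hC, β, hβ, hβ1, h⟩ := hf
  obtain ⟨D, hD, δ, hδ, hδ1, h'⟩ := hg
  refine ⟨C + D, by positivity, max β δ, le_max_of_le_left hβ, max_lt hβ1 hδ1, fun k => ?_⟩
  have h1 : β ^ k ≤ max β δ ^ k := pow_le_pow_left₀ hβ (le_max_left _ _) k
  have h2 : δ ^ k ≤ max β δ ^ k := pow_le_pow_left₀ hδ (le_max_right _ _) k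
  calc |f k + g k| ≤ |f k| + |g k| := abs_add_le _ _
    _ ≤ C * β ^ k + D * δ ^ k := add_le_add (h k) (h' k)
    _ ≤ C * max β δ ^ k + D * max β δ ^ k := by gcongr
    _ = _ := by ring

lemma LD.const_mul {f : ℕ → ℝ} (c : ℝ) (hf : LD f) : LD (fun k => c * f k) := by
  obtain ⟨C, hC, β, hβ, hβ1, h⟩ := hf
  refine ⟨|c| * C, by positivity, β, hβ, hβ1, fun k => ?_⟩
  rw [abs_mul, mul_assoc]
  exact mul_le_mul_of_nonneg_left (h k) (abs_nonneg c)

lemma LD.sum {ι : Type*} (s : Finset ι) {f : ι → ℕ → ℝ} (hf : ∀ i, LD (f i)) :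
    LD (fun k => ∑ i ∈ s, f i k) := by
  classical
  induction s using Finset.induction_on with
  | empty => simpa using LD.zero
  | insert a s ha ih => 
    simp only [Finset.sum_insert ha]
    exact (hf a).add ih

lemma LD.abs {f : ℕ → ℝ} (hf : LD f) : LD (fun k => |f k|) := by
  obtain ⟨C, hC, β, hβ, hβ1, h⟩ := hf
  exact ⟨C, hC, β, hβ, hβ1, by simpa using h⟩

lemma LD.mulVec {m n : ℕ} (A : Matrix (Fin m) (Fin n) ℝ) {f : ℕ → Fin n → ℝ}
    (hf : ∀ j, LD (fun k => f k j)) (i : Fin m) : LD (fun k => (A *ᵥ f k) i) := by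
  simp only [Matrix.mulVec, dotProduct]
  exact LD.sum _ (fun j => (hf j).const_mul (A i j))

lemma LD.of_succ {f : ℕ → ℝ} (hf : LD (fun k => f (k+1))) : LD f := by
  obtain ⟨C, hC, β, hβ, hβ1, h⟩ := hf
  refine ⟨|f 0| + 2 * C, by positivity, max β (1/2), le_max_of_le_left hβ,
    max_lt hβ1 (by norm_num), fun k => ?_⟩
  set δ := max β (1/2)
  have hδ : 1/2 ≤ δ := le_max_right _ _
  cases k with
  | zero => simp; linarith
  | succ k =>
    have h1 : β ^ k ≤ δ ^ k := pow_le_pow_left₀ hβ (le_max_left _ _) k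
    have h2 : 0 ≤ δ ^ k := by positivity
    calc |f (k+1)| ≤ C * β ^ k := h k
      _ ≤ C * δ ^ k := by gcongr
      _ ≤ (2 * C * δ) * δ ^ k := by
        apply mul_le_mul_of_nonneg_right _ h2
        nlinarith
      _ ≤ (|f 0| + 2 * C) * δ ^ (k+1) := by
        have : 0 ≤ |f 0| * (δ * δ^k) := by positivity
        rw [pow_succ]; nlinarith

lemma step_ineq (p a s d : ℝ) (hp : 0 < p) (hp1 : p < 1) (ha : 0 ≤ a) (ha1 : a ≤ 1) :
    (1 - p) * (p * (s + a * d))^2 + (p * (s + a * d) - s)^2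
      ≤ (1 - p*(1-p)/3) * ((1-p) * s^2 + d^2) := by
  have h1 : (1-p) * s^2 + d^2 - ((1 - p) * (p * (s + a * d))^2 + (p * (s + a * d) - s)^2)
    = (1-p) * (a^2*d^2 + p*(1-p)*(s+a*d)^2) + (1-a^2)*d^2 := by ring
  have ha2 : a^2 ≤ 1 := by nlinarith
  have h2 : (1-p) * d^2 ≤ (1-p) * (a^2*d^2) + (1-a^2)*d^2 := by
    have : 0 ≤ p * ((1-a^2) * d^2) :=
      mul_nonneg hp.le (mul_nonneg (by linarith) (sq_nonneg d))
    nlinarith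
  have h3 : s^2 ≤ 2 * (s+a*d)^2 + 2 * d^2 := by
    have : 0 ≤ (1-a^2) * d^2 := mul_nonneg (by linarith) (sq_nonneg d)
    nlinarith [sq_nonneg (s + 2 * (a*d))]
  have hq : 0 < 1 - p := by linarith
  set Y := (s+a*d)^2
  have hY : 0 ≤ Y := sq_nonneg _
  have h4 : p*(1-p)/3 * ((1-p) * s^2 + d^2) ≤ p*(1-p)/3 * ((1-p) * (2 * Y + 2 * d^2) + d^2) := by
    gcongr
  have h5 : p*(1-p)/3 * ((1-p) * (2 * Y + 2 * d^2) + d^2) ≤ (1-p) * d^2 + (1-p)*(p*(1-p)*Y) := by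
    have e1 : 0 ≤ p*(1-p)^2*Y := by positivity
    have e2 : 0 ≤ (1-p)*d^2 := by positivity
    have e3 : p * (1 - p) / 3 * (2 * (1-p) + 1) ≤ (1-p) := by nlinarith [mul_pos hp hq]
    have e4 : p * (1 - p) / 3 * (2 * (1-p) + 1) * d^2 ≤ (1-p) * d^2 := by gcongr
    nlinarith
  nlinarith

lemma scalar_LD (p : ℝ) (hp : 0 ≤ p) (hp1 : p < 1) (a r : ℕ → ℝ) (ha : ∀ j, 0 ≤ a j ∧ a j ≤ 1)
    (hr : ∀ j, r (j+2) = p * (r (j+1) + a j * (r (j+1) - r j))) : LD r := by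
  rcases hp.eq_or_lt with rfl | hp
  · apply LD.of_succ; apply LD.of_succ
    simp only [add_assoc, Nat.reduceAdd, hr, zero_mul]
    exact LD.zero
  · apply LD.of_succ
    set q := 1 - p*(1-p)/3 with hq
    have hq0 : 0 ≤ q := by nlinarith
    have hq1 : q < 1 := by nlinarith
    have hE : ∀ j, (1-p) * r (j+1)^2 + (r (j+1) - r j)^2 ≤
        ((1-p) * r 1^2 + (r 1 - r 0)^2) * q^j := by
      intro j
      induction j with
      | zero => simp
      | succ j ih =>
        have := step_ineq p (a j) (r (j+1)) (r (j+1) - r j) hp hp1 (ha j).1 (ha j).2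
        rw [← hr j, ← hq] at this
        calc _ ≤ _ := this
          _ ≤ q * _ := mul_le_mul_of_nonneg_left ih hq0
          _ = _ := by ring
    set E := (1-p) * r 1^2 + (r 1 - r 0)^2
    refine ⟨√(E / (1-p)), Real.sqrt_nonneg _, √q, Real.sqrt_nonneg _, ?_, fun k => ?_⟩
    · rw [Real.sqrt_lt' one_pos]; linarith
    · have hpp : 0 < 1 - p := by linarith
      have hE0 : 0 ≤ E := by positivity
      refine abs_le_of_sq_le_sq ?_ (by positivity)
      rw [mul_pow, ← pow_mul, mul_comm k 2, pow_mul, Real.sq_sqrt hq0, Real.sq_sqrt (by positivity),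
        div_mul_eq_mul_div, le_div_iff₀ hpp]
      nlinarith [hE k, sq_nonneg (r (k+1) - r k)]
lemma psd_lam {n m : ℕ} (A : Matrix (Fin m) (Fin n) ℝ) (u : Fin n → ℝ) :
    u ⬝ᵥ ((Aᵀ * A) *ᵥ u) ≤ lamMax (Aᵀ * A) * (u ⬝ᵥ u) := by
  have hS : (Aᵀ * A).IsHermitian := by
    simpa [conjTranspose_eq_transpose_of_trivial] using Matrix.isHermitian_conjTranspose_mul_self A
  have h : (algebraMap ℝ (Matrix (Fin n) (Fin n) ℝ) (lamMax (Aᵀ * A)) - Aᵀ * A).PosSemidef := by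
    rw [Matrix.posSemidef_iff_isHermitian_and_spectrum_nonneg]
    constructor
    · apply IsHermitian.sub _ hS
      rw [Matrix.algebraMap_eq_diagonal]
      simp [IsHermitian, diagonal_conjTranspose]
    · rw [← spectrum.singleton_sub_eq]
      rintro _ ⟨a, rfl, b, hb, rfl⟩
      simp only [Set.mem_setOf_eq, sub_nonneg]
      exact le_csSup (Matrix.finite_spectrum _).bddAbove hb
  have := h.dotProduct_mulVec_nonneg u
  simp only [star_trivial, sub_mulVec, dotProduct_sub, Algebra.algebraMap_eq_smul_one, smul_mulVec,
    one_mulVec, dotProduct_smul, smul_eq_mul] at this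
  linarith

lemma dirichlet {n : ℕ} (W : Matrix (Fin n) (Fin n) ℝ) (hs : Wᵀ = W)
    (hrow : ∀ i, ∑ j, W i j = 1) (u : Fin n → ℝ) :
    u ⬝ᵥ u - u ⬝ᵥ (W *ᵥ u) = (∑ i, ∑ j, W i j * (u i - u j)^2) / 2 := by
  have hs' : ∀ i j, W i j = W j i := fun i j => by
    conv_lhs => rw [← hs]
    rfl
  have h1 : ∑ i, ∑ j, W i j * (u i)^2 = u ⬝ᵥ u := by
    simp only [← Finset.sum_mul, hrow, dotProduct]
    exact Finset.sum_congr rfl fun i _ => by ring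
  have h2 : ∑ i, ∑ j, W i j * (u j)^2 = u ⬝ᵥ u := by
    rw [← h1, Finset.sum_comm]
    exact Finset.sum_congr rfl fun i _ => Finset.sum_congr rfl fun j _ => by rw [hs']
  have h3 : ∑ i, ∑ j, W i j * (u i * u j) = u ⬝ᵥ (W *ᵥ u) := by
    simp only [dotProduct, mulVec, Finset.mul_sum]
    exact Finset.sum_congr rfl fun i _ => Finset.sum_congr rfl fun j _ => by ring
  have : ∑ i, ∑ j, W i j * (u i - u j)^2 = ∑ i, ∑ j, W i j * (u i)^2 + 
      ∑ i, ∑ j, W i j * (u j)^2 - 2 * ∑ i, ∑ j, W i j * (u i * u j) := by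
    simp only [Finset.mul_sum, ← Finset.sum_add_distrib, ← Finset.sum_sub_distrib]
    exact Finset.sum_congr rfl fun i _ => Finset.sum_congr rfl fun j _ => by ring
  rw [this, h1, h2, h3]; ring

lemma const_of {n : ℕ} (W : Matrix (Fin n) (Fin n) ℝ)
    (hirr : ∀ i j, ∃ k : ℕ, 0 < k ∧ 0 < (W ^ k) i j) (u : Fin n → ℝ)
    (h : ∀ i j, W i j ≠ 0 → u i = u j) (i j : Fin n) : u i = u j := by
  have key : ∀ k : ℕ, ∀ i j, (W^k) i j ≠ 0 → u i = u j := by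
    intro k
    induction k with
    | zero =>
      intro i j hij
      by_contra hne
      have : i ≠ j := fun e => hne (by rw [e])
      simp [Matrix.one_apply, this] at hij
    | succ k ih =>
      intro i j hij
      rw [pow_succ, Matrix.mul_apply] at hij
      obtain ⟨l, _, hl⟩ := Finset.exists_ne_zero_of_sum_ne_zero hij
      exact (ih i l (left_ne_zero_of_mul hl)).trans (h l j (right_ne_zero_of_mul hl))
  obtain ⟨k, _, hk⟩ := hirr i j
  exact key k i j hk.ne'

lemma key {n m : ℕ} (W : Matrix (Fin n) (Fin n) ℝ) (hs : Wᵀ = W)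
    (hnonneg : ∀ i j, 0 ≤ W i j) (hrow : ∀ i, ∑ j, W i j = 1)
    (hirr : ∀ i j, ∃ k : ℕ, 0 < k ∧ 0 < (W ^ k) i j)
    (A : Matrix (Fin m) (Fin n) ℝ)
    (hA1 : A *ᵥ (fun _ => (1 : ℝ)) ≠ 0)
    (γ : ℝ) (hγ0 : 0 < γ) (hγ1 : γ < 1 / lamMax (Aᵀ * A)) (p : ℝ) (hp : 1 ≤ p) (u : Fin n → ℝ)
    (hu : W *ᵥ (u - γ • (Aᵀ *ᵥ (A *ᵥ u))) = p • u) : u = 0 := by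
  set L := lamMax (Aᵀ * A) with hL
  have hL0 : 0 < L := by
    by_contra h
    have : 1 / L ≤ 0 := one_div_nonpos.mpr (not_lt.mp h)
    linarith
  have hgL : γ * L < 1 := by rwa [lt_div_iff₀ hL0] at hγ1
  have hdir : ∀ v : Fin n → ℝ, v ⬝ᵥ (W *ᵥ v) ≤ v ⬝ᵥ v := fun v => by
    have := dirichlet W hs hrow v
    have h2 : 0 ≤ ∑ i, ∑ j, W i j * (v i - v j)^2 :=
      Finset.sum_nonneg fun i _ => Finset.sum_nonneg fun j _ =>
        mul_nonneg (hnonneg i j) (sq_nonneg _)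
    linarith
  have hq : ∀ v w : Fin n → ℝ, v ⬝ᵥ (Aᵀ *ᵥ (A *ᵥ w)) = (A *ᵥ v) ⬝ᵥ (A *ᵥ w) := fun v w => by
    rw [dotProduct_mulVec, vecMul_transpose]
  have hlam : ∀ v : Fin n → ℝ, (A *ᵥ v) ⬝ᵥ (A *ᵥ v) ≤ L * (v ⬝ᵥ v) := fun v => by
    rw [← hq, mulVec_mulVec]; exact psd_lam A v
  set v := Aᵀ *ᵥ (A *ᵥ u) with hv
  have huv : u ⬝ᵥ v = (A *ᵥ u) ⬝ᵥ (A *ᵥ u) := hq u u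
  have hvu : v ⬝ᵥ u = (A *ᵥ u) ⬝ᵥ (A *ᵥ u) := by rw [dotProduct_comm, huv]
  have hvv : v ⬝ᵥ v = (A *ᵥ v) ⬝ᵥ (A *ᵥ u) := hq v u
  have hvv2 : v ⬝ᵥ v ≤ L * ((A *ᵥ u) ⬝ᵥ (A *ᵥ u)) := by
    have h1 : 0 ≤ (A *ᵥ (v - L • u)) ⬝ᵥ (A *ᵥ (v - L • u)) :=
      Finset.sum_nonneg fun i _ => mul_self_nonneg _
    have h2 := hlam v
    simp only [mulVec_sub, mulVec_smul, dotProduct_sub, sub_dotProduct, dotProduct_smul,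
      smul_dotProduct, smul_eq_mul] at h1
    rw [dotProduct_comm (A *ᵥ u) (A *ᵥ v), ← hvv] at h1
    nlinarith
  set a := (A *ᵥ u) ⬝ᵥ (A *ᵥ u) with ha
  have ha0 : 0 ≤ a := Finset.sum_nonneg fun i _ => mul_self_nonneg _
  have hAu : A *ᵥ u = 0 := by
    have h1 := hdir (u - γ • v)
    rw [hu] at h1
    simp only [dotProduct_sub, sub_dotProduct, dotProduct_smul,
      smul_dotProduct, smul_eq_mul, huv, hvu] at h1
    have h2 := hlam u
    have h3 : 0 ≤ u ⬝ᵥ u - γ * a := by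
      have h5 : 0 ≤ u ⬝ᵥ u := Finset.sum_nonneg fun i _ => mul_self_nonneg _
      have : γ * a ≤ γ * (L * (u ⬝ᵥ u)) := by gcongr
      nlinarith
    have h4 : γ * (γ * (v ⬝ᵥ v)) ≤ γ * (γ * (L * a)) := by gcongr
    have h6 : (u ⬝ᵥ u - γ * a) ≤ p * (u ⬝ᵥ u - γ * a) := le_mul_of_one_le_left h3 hp
    have h7 : γ * (1 - γ * L) * a ≤ 0 := by nlinarith
    have h8 : 0 < γ * (1 - γ * L) := mul_pos hγ0 (by linarith)
    have h9 : a = 0 := le_antisymm (by by_contra h; push Not at h; nlinarith [mul_pos h8 h]) ha0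
    exact dotProduct_self_eq_zero.mp h9
  have hv0 : v = 0 := by rw [hv, hAu, mulVec_zero]
  rw [hv0, smul_zero, sub_zero] at hu
  have hz : ∑ i, ∑ j, W i j * (u i - u j)^2 = 0 := by
    have h1 := dirichlet W hs hrow u
    rw [hu, dotProduct_smul, smul_eq_mul] at h1
    have h2 : 0 ≤ ∑ i, ∑ j, W i j * (u i - u j)^2 :=
      Finset.sum_nonneg fun i _ => Finset.sum_nonneg fun j _ =>
        mul_nonneg (hnonneg i j) (sq_nonneg _)
    have h5 : 0 ≤ u ⬝ᵥ u := Finset.sum_nonneg fun i _ => mul_self_nonneg _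
    nlinarith
  have hedge : ∀ i j, W i j ≠ 0 → u i = u j := by
    intro i j hij
    have h1 := (Finset.sum_eq_zero_iff_of_nonneg (fun i _ => Finset.sum_nonneg fun j _ =>
        mul_nonneg (hnonneg i j) (sq_nonneg (u i - u j)))).mp hz i (Finset.mem_univ _)
    have h2 := (Finset.sum_eq_zero_iff_of_nonneg (fun j _ =>
        mul_nonneg (hnonneg i j) (sq_nonneg (u i - u j)))).mp h1 j (Finset.mem_univ _)
    have h3 := (mul_eq_zero.mp h2).resolve_left hij
    have := pow_eq_zero_iff (two_ne_zero) |>.mp h3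
    linarith
  have hc := const_of W hirr u hedge
  funext i
  by_contra hne
  have hui : u = u i • (fun _ => (1:ℝ)) := by
    funext j; simp [hc j i]
  rw [hui, mulVec_smul] at hAu
  exact hA1 ((smul_eq_zero.mp hAu).resolve_left hne)

lemma vec_LD {n : ℕ} (P : Matrix (Fin n) (Fin n) ℝ) (hP : P.IsHermitian)
    (h0 : ∀ i, 0 ≤ hP.eigenvalues i) (h1 : ∀ i, hP.eigenvalues i < 1)
    (a : ℕ → ℝ) (ha : ∀ j, 0 ≤ a j ∧ a j ≤ 1) (g : ℕ → Fin n → ℝ)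
    (hg : ∀ j, g (j+2) = P *ᵥ (g (j+1) + a j • (g (j+1) - g j))) (i : Fin n) :
    LD (fun k => g k i) := by
  set U : Matrix (Fin n) (Fin n) ℝ := (hP.eigenvectorUnitary : Matrix (Fin n) (Fin n) ℝ) with hU
  have hUU : U * star U = 1 := Unitary.coe_mul_star_self hP.eigenvectorUnitary
  have hUU' : star U * U = 1 := Unitary.coe_star_mul_self hP.eigenvectorUnitary
  have hspec : P = U * diagonal hP.eigenvalues * star U := by
    have := hP.spectral_theorem
    rw [Unitary.conjStarAlgAut_apply] at this
    exact this
  have hUP : star U * P = diagonal hP.eigenvalues * star U := by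
    conv_lhs => rw [hspec]
    rw [← mul_assoc, ← mul_assoc, hUU', one_mul]
  have hs : ∀ i, LD (fun k => (star U *ᵥ g k) i) := by
    intro i
    apply scalar_LD (hP.eigenvalues i) (h0 i) (h1 i) a _ ha
    intro j
    rw [hg j, mulVec_mulVec, hUP, ← mulVec_mulVec, mulVec_diagonal, mulVec_add, mulVec_smul,
      mulVec_sub]
    simp
  have := LD.mulVec U (f := fun k => star U *ᵥ g k) hs i
  simpa [mulVec_mulVec, hUU] using this

lemma psd_factor {n : ℕ} (W : Matrix (Fin n) (Fin n) ℝ) (hW : W.PosSemidef) :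
    ∃ B : Matrix (Fin n) (Fin n) ℝ, W = Bᵀ * B := by
  open scoped MatrixOrder in
  have h := CFC.sqrt_mul_sqrt_self W hW.nonneg
  have h2 : (CFC.sqrt W).PosSemidef := (CFC.sqrt_nonneg W).posSemidef
  refine ⟨CFC.sqrt W, ?_⟩
  rw [← conjTranspose_eq_transpose_of_trivial, h2.isHermitian.eq, h]

lemma abs_le_norm2 {n : ℕ} (v : Fin n → ℝ) (i : Fin n) : |v i| ≤ norm2 v := by
  unfold norm2
  apply Real.abs_le_sqrt
  exact Finset.single_le_sum (f := fun i => v i ^ 2) (fun i _ => sq_nonneg _) (Finset.mem_univ i)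

lemma norm2_le_sum {n : ℕ} (v : Fin n → ℝ) : norm2 v ≤ ∑ i, |v i| := by
  unfold norm2
  have h0 : 0 ≤ ∑ i, |v i| := Finset.sum_nonneg fun i _ => abs_nonneg _
  rw [Real.sqrt_le_left h0]
  calc ∑ i, v i ^ 2 = ∑ i, |v i| ^ 2 := by simp
    _ ≤ _ := Finset.sum_sq_le_sq_sum_of_nonneg (fun i _ => abs_nonneg _)

lemma alpha_mem (t α : ℕ → ℝ) (ht1 : t 1 = 1)
    (ht : ∀ k, 1 ≤ k → t (k + 1) = (1 + Real.sqrt (1 + 4 * t k ^ 2)) / 2)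
    (hα : ∀ k, 1 ≤ k → α k = (t k - 1) / t (k + 1)) (k : ℕ) (hk : 1 ≤ k) :
    0 ≤ α k ∧ α k ≤ 1 := by
  have h1 : ∀ k, 1 ≤ k → t k ≤ t (k+1) := by
    intro k hk
    rw [ht k hk]
    have : 2 * t k ≤ √(1 + 4 * t k ^ 2) := Real.le_sqrt_of_sq_le (by nlinarith)
    linarith
  have h2 : 1 ≤ t k := by
    induction k, hk using Nat.le_induction with
    | base => rw [ht1]
    | succ k hk ih => exact ih.trans (h1 k hk)
  have h3 := h1 k hk
  rw [hα k hk]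
  constructor
  · apply div_nonneg <;> linarith
  · rw [div_le_one (by linarith)]; linarith

lemma seq_exists {n : ℕ} (F : (Fin n → ℝ) → (Fin n → ℝ)) (α : ℕ → ℝ) :
    ∃ x y : ℕ → Fin n → ℝ, y 1 = x 0 ∧ (∀ k, 1 ≤ k → x k = F (y k)) ∧
      (∀ k, 1 ≤ k → y (k + 1) = x k + α k • (x k - x (k - 1))) := by
  let st : ℕ → (Fin n → ℝ) × (Fin n → ℝ) := fun k => Nat.rec (0, 0)
    (fun k q => (F q.2, F q.2 + α (k+1) • (F q.2 - q.1))) k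
  refine ⟨fun k => (st k).1, fun k => (st (k-1)).2, rfl, ?_, ?_⟩
  · intro k hk
    obtain ⟨k, rfl⟩ := Nat.exists_eq_add_of_le' hk
    rfl
  · intro k hk
    obtain ⟨k, rfl⟩ := Nat.exists_eq_add_of_le' hk
    rfl

lemma conv_main {n m : ℕ} (W : Matrix (Fin n) (Fin n) ℝ)
    (hW : W.PosSemidef)
    (hnonneg : ∀ i j, 0 ≤ W i j) (hrow : ∀ i, ∑ j, W i j = 1)
    (hirr : ∀ i j, ∃ k : ℕ, 0 < k ∧ 0 < (W ^ k) i j)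
    (A : Matrix (Fin m) (Fin n) ℝ)
    (hA1 : A *ᵥ (fun _ => (1 : ℝ)) ≠ 0)
    (b : Fin m → ℝ)
    (γ : ℝ) (hγ0 : 0 < γ) (hγ1 : γ < 1 / lamMax (Aᵀ * A))
    (α : ℕ → ℝ) (hα : ∀ k, 1 ≤ k → 0 ≤ α k ∧ α k ≤ 1) :
    ∃ xs : Fin n → ℝ,
      ∀ x y : ℕ → Fin n → ℝ,
        (∀ k, 1 ≤ k → x k = W *ᵥ (y k - γ • (Aᵀ *ᵥ (A *ᵥ y k - b)))) →
        (∀ k, 1 ≤ k → y (k + 1) = x k + α k • (x k - x (k - 1))) →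
        ∀ i, LD (fun k => x k i - xs i) := by
  have hs : Wᵀ = W := by
    rw [← conjTranspose_eq_transpose_of_trivial]; exact hW.isHermitian.eq
  have hkey := key W hs hnonneg hrow hirr A hA1 γ hγ0 hγ1
  set M : Matrix (Fin n) (Fin n) ℝ := 1 - γ • (Aᵀ * A) with hM
  have hMv : ∀ v, M *ᵥ v = v - γ • (Aᵀ *ᵥ (A *ᵥ v)) := fun v => by
    rw [hM, sub_mulVec, one_mulVec, smul_mulVec, mulVec_mulVec]
  have hMpsd : M.PosSemidef := by
    apply PosSemidef.of_dotProduct_mulVec_nonneg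
    · have hS : (Aᵀ * A)ᵀ = Aᵀ * A := by simp
      simp [IsHermitian, hM, conjTranspose_eq_transpose_of_trivial]
    · intro v
      have hL0 : 0 < lamMax (Aᵀ * A) := by
        by_contra h
        have : 1 / lamMax (Aᵀ * A) ≤ 0 := one_div_nonpos.mpr (not_lt.mp h)
        linarith
      have hgL : γ * lamMax (Aᵀ * A) < 1 := by rwa [lt_div_iff₀ hL0] at hγ1
      have h1 := mul_le_mul_of_nonneg_left (psd_lam A v) hγ0.le
      have h5 : 0 ≤ v ⬝ᵥ v := Finset.sum_nonneg fun i _ => mul_self_nonneg _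
      rw [hM, sub_mulVec, one_mulVec, smul_mulVec, star_trivial, dotProduct_sub, dotProduct_smul,
        smul_eq_mul]
      nlinarith
  obtain ⟨B, hB⟩ := psd_factor W hW
  have hP : (B * M * Bᵀ).PosSemidef := by
    have := hMpsd.mul_mul_conjTranspose_same B
    rwa [conjTranspose_eq_transpose_of_trivial] at this
  have heig : ∀ i, hP.isHermitian.eigenvalues i < 1 := by
    intro i
    by_contra hlt
    push Not at hlt
    set p := hP.isHermitian.eigenvalues i
    set v : Fin n → ℝ := ⇑(hP.isHermitian.eigenvectorBasis i) with hv
    have hev : (B * M * Bᵀ) *ᵥ v = p • v := hP.isHermitian.mulVec_eigenvectorBasis i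
    have hv0 : v ≠ 0 := by
      intro h
      have := hP.isHermitian.eigenvectorBasis.orthonormal.ne_zero i
      apply this
      ext j
      exact congrFun h j
    have hu : Bᵀ *ᵥ v = 0 := by
      apply hkey p hlt
      rw [← hMv, hB, ← mulVec_smul, ← hev]
      simp only [mulVec_mulVec, mul_assoc]
    rw [← mulVec_mulVec, hu, mulVec_zero] at hev
    rcases smul_eq_zero.mp hev.symm with h | h
    · linarith
    · exact hv0 h
  -- fixed point
  have hsurj : Function.Surjective (fun v => (1 - W * M) *ᵥ v) := by
    rw [mulVec_surjective_iff_isUnit, ← mulVec_injective_iff_isUnit]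
    intro v w hvw
    rw [← sub_eq_zero]
    apply hkey 1 le_rfl
    simp only [sub_mulVec, one_mulVec] at hvw
    rw [← hMv, mulVec_mulVec, mulVec_sub, one_smul]
    have := sub_eq_zero.mpr hvw
    rw [← sub_eq_zero, ← neg_eq_zero, ← this]
    abel
  obtain ⟨xs, hxs⟩ := hsurj (W *ᵥ (γ • (Aᵀ *ᵥ b)))
  simp only [sub_mulVec, one_mulVec] at hxs
  refine ⟨xs, fun x y hx hy => ?_⟩
  have he : ∀ k, 1 ≤ k → x k - xs = Bᵀ *ᵥ (B *ᵥ (M *ᵥ (y k - xs))) := by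
    intro k hk
    rw [mulVec_mulVec, ← hB, mulVec_sub, mulVec_sub, mulVec_mulVec xs W M]
    have h1 : x k = W *ᵥ (M *ᵥ y k) + W *ᵥ (γ • (Aᵀ *ᵥ b)) := by
      rw [hx k hk, ← mulVec_add, hMv, mulVec_sub Aᵀ, smul_sub]
      congr 1; abel
    rw [h1, ← hxs]; abel
  set g : ℕ → Fin n → ℝ := fun k => B *ᵥ (M *ᵥ (y (k+1) - xs)) with hgdef
  have heg : ∀ k, x (k+1) - xs = Bᵀ *ᵥ g k := fun k => he (k+1) (by omega)
  have hg : ∀ j, g (j+2) = (B * M * Bᵀ) *ᵥ (g (j+1) + α (j+2) • (g (j+1) - g j)) := by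
    intro j
    have : y (j+2+1) - xs = Bᵀ *ᵥ (g (j+1) + α (j+2) • (g (j+1) - g j)) := by
      rw [hy (j+2) (by omega), mulVec_add, mulVec_smul, mulVec_sub, ← heg, ← heg]
      have : j + 2 - 1 = j + 1 := by omega
      rw [this, sub_sub_sub_cancel_right]
      abel
    simp only [← mulVec_mulVec, ← this]
    rfl
  have hLD := vec_LD (B * M * Bᵀ) hP.isHermitian hP.eigenvalues_nonneg heig (fun j => α (j+2))
    (fun j => hα _ (by omega)) g hg
  intro i
  apply LD.of_succ
  have := LD.mulVec Bᵀ hLD i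
  simp only [← heg] at this
  exact this

theorem stmt16 (n m : ℕ) (W : Matrix (Fin n) (Fin n) ℝ)
    (hW : W.PosSemidef)
    (hnonneg : ∀ i j, 0 ≤ W i j) (hrow : ∀ i, ∑ j, W i j = 1)
    (hirr : ∀ i j, ∃ k : ℕ, 0 < k ∧ 0 < (W ^ k) i j)
    (A : Matrix (Fin m) (Fin n) ℝ) (hA : A ≠ 0)
    (hA1 : A *ᵥ (fun _ => (1 : ℝ)) ≠ 0)
    (b : Fin m → ℝ)
    (γ : ℝ) (hγ0 : 0 < γ) (hγ1 : γ < 1 / lamMax (Aᵀ * A))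
    (t α : ℕ → ℝ) (ht1 : t 1 = 1)
    (ht : ∀ k, 1 ≤ k → t (k + 1) = (1 + Real.sqrt (1 + 4 * t k ^ 2)) / 2)
    (hα : ∀ k, 1 ≤ k → α k = (t k - 1) / t (k + 1)) :
    ∃! xs : Fin n → ℝ,
      ∀ x y : ℕ → Fin n → ℝ,
        y 1 = x 0 →
        (∀ k, 1 ≤ k → x k = W *ᵥ (y k - γ • (Aᵀ *ᵥ (A *ᵥ y k - b)))) →
        (∀ k, 1 ≤ k → y (k + 1) = x k + α k • (x k - x (k - 1))) →
        ∃ C, 0 < C ∧ ∃ β, 0 ≤ β ∧ β < 1 ∧ ∃ K, 1 ≤ K ∧ ∀ k, K ≤ k →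
          norm2 (x k - xs) ≤ C * β ^ k := by
  obtain ⟨xs, hxs⟩ := conv_main W hW hnonneg hrow hirr A hA1 b γ hγ0 hγ1 α
    (alpha_mem t α ht1 ht hα)
  refine ⟨xs, ?_, ?_⟩
  · intro x y _ hx hy
    obtain ⟨C, hC, β, hβ, hβ1, h⟩ := LD.sum Finset.univ (fun i => (hxs x y hx hy i).abs)
    refine ⟨C + 1, by positivity, β, hβ, hβ1, 1, le_rfl, fun k _ => ?_⟩
    have hb : 0 ≤ β ^ k := by positivity
    have h1 : norm2 (x k - xs) ≤ ∑ i, |x k i - xs i| := norm2_le_sum _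
    have h2 := (le_abs_self _).trans (h k)
    linarith
  · intro xs' h'
    obtain ⟨x, y, h1, h2, h3⟩ := seq_exists
      (fun y => W *ᵥ (y - γ • (Aᵀ *ᵥ (A *ᵥ y - b)))) α
    obtain ⟨C, hC, β, hβ, hβ1, K, hK, h⟩ := h' x y h1 h2 h3
    funext i
    obtain ⟨D, hD, δ, hδ, hδ1, hh⟩ := hxs x y h2 h3 i
    have l1 : Tendsto (fun k => x k i - xs' i) atTop (nhds 0) := by
      apply squeeze_zero_norm' (a := fun k => C * β ^ k)
      · filter_upwards [eventually_ge_atTop K] with k hk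
        exact (abs_le_norm2 (x k - xs') i).trans (h k hk)
      · simpa using (tendsto_pow_atTop_nhds_zero_of_lt_one hβ hβ1).const_mul C
    have l2 : Tendsto (fun k => x k i - xs i) atTop (nhds 0) := by
      apply squeeze_zero_norm (a := fun k => D * δ ^ k) hh
      simpa using (tendsto_pow_atTop_nhds_zero_of_lt_one hδ hδ1).const_mul D
    have l3 := l2.sub l1
    have l4 : Tendsto (fun _ : ℕ => xs' i - xs i) atTop (nhds 0) := by
      simpa using l3
    have := tendsto_nhds_unique l4 tendsto_const_nhds
    linarith
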